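/- Let X be a Tychonoff space and x ∈ X. If player II has a winning strategy in the game G1(πN_x, πN_x) played on X, then X is supertight at x. -/

import Mathlib

/-!
After any position of the game, all singletons `{y}` with `y` close enough to `x` are possible
next answers of the strategy: otherwise the singletons that are never answered would form a
π-network of finite sets, and the strategy would have to answer that move by one of its members
(`exists_nhds_answers`). Since `P` is a π-network, for every position there is some `C ∈ P`
each of whose points is, as a singleton, a possible answer.

As every such `C` is countable, starting from the empty position and allowing only these answers
produces a countable tree of positions; let `Q` be the family of all the sets `C` attached to its
nodes. If some neighborhood `U` of `x` contained no member of `Q`, one could follow a branch of the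
tree along which every answer is a singleton `{y}` with `y ∉ U`, so the strategy would lose that
run.
-/

open Set Topology Filter

/-- Player II has a winning strategy in the single-selection game `G₁(𝒜, ·)`: to each
nonempty finite sequence of moves of player I (members of `𝒜`) the strategy assigns an
element of the last move, and the set of all selections along any run satisfies `Win`. -/
def HasWinningStrategyII {α : Type*} (𝒜 : Set (Set α)) (Win : Set α → Prop) : Prop :=
  ∃ F : (n : ℕ) → (Fin (n + 1) → Set α) → α,
    (∀ (n : ℕ) (D : Fin (n + 1) → Set α), (∀ i, D i ∈ 𝒜) → F n D ∈ D (Fin.last n)) ∧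
    ∀ D : ℕ → Set α, (∀ n, D n ∈ 𝒜) → Win {y | ∃ n : ℕ, y = F n fun i => D i.val}

/-- `πN_z`: the collection of all π-networks at `z` consisting of (nonempty) finite sets;
a family of nonempty sets is a π-network at `z` if every neighborhood of `z` contains a
member of the family. -/
def piNetworks {Z : Type*} [TopologicalSpace Z] (z : Z) : Set (Set (Set Z)) :=
  {𝒮 | (∀ S ∈ 𝒮, S.Finite ∧ S.Nonempty) ∧ ∀ U ∈ 𝓝 z, ∃ S ∈ 𝒮, S ⊆ U}

/-- Near `x`, every singleton is an answer of the strategy to some move at round `n`, after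
the moves `d 0, …, d (n - 1)`. The position is encoded by a full sequence `d` of legal moves, whose
values from index `n` on are irrelevant. -/
lemma exists_nhds_answers {X : Type*} [TopologicalSpace X] {x : X}
    {F : (n : ℕ) → (Fin (n + 1) → Set (Set X)) → Set X}
    (hF : ∀ (n : ℕ) (D : Fin (n + 1) → Set (Set X)), (∀ i, D i ∈ piNetworks x) →
      F n D ∈ D (Fin.last n))
    (n : ℕ) (d : ℕ → piNetworks x) :
    ∃ U ∈ 𝓝 x, ∀ y ∈ U, ∃ D : piNetworks x,
      F n (fun i => (Function.update d n D i.val : Set (Set X))) = {y} := by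
  by_contra! hcon
  let E : Set (Set X) := {S | ∃ y, S = {y} ∧ ∀ D : piNetworks x,
      F n (fun i => (Function.update d n D i.val : Set (Set X))) ≠ {y}}
  have hE : E ∈ piNetworks x := by
    refine ⟨?_, fun U hU => ?_⟩
    · rintro S ⟨y, rfl, -⟩
      exact ⟨finite_singleton y, singleton_nonempty y⟩
    · obtain ⟨y, hyU, hy⟩ := hcon U hU
      exact ⟨{y}, ⟨y, rfl, hy⟩, singleton_subset_iff.2 hyU⟩
  have hmem := hF n (fun i => (Function.update d n ⟨E, hE⟩ i.val : Set (Set X)))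
    (fun i => Subtype.property _)
  simp only [Fin.val_last, Function.update_self] at hmem
  obtain ⟨y, hy, hne⟩ := hmem
  exact hne ⟨E, hE⟩ hy

/-- if `X` is Tychonoff and player II has a winning strategy in the game
`G₁(πN_x, πN_x)` played on `X`, then `X` is supertight at `x`: every π-network at `x`
consisting of countable (nonempty) sets has a countable subfamily which is still a
π-network at `x`. -/
theorem statement18 {X : Type*} [TopologicalSpace X] [CompletelyRegularSpace X] [T2Space X]
    (x : X)
    (h : HasWinningStrategyII (piNetworks x) (fun 𝒮 => ∀ U ∈ 𝓝 x, ∃ S ∈ 𝒮, S ⊆ U)) :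
    ∀ P : Set (Set X), (∀ S ∈ P, S.Countable ∧ S.Nonempty) →
      (∀ U ∈ 𝓝 x, ∃ S ∈ P, S ⊆ U) →
      ∃ Q ⊆ P, Q.Countable ∧ ∀ U ∈ 𝓝 x, ∃ S ∈ Q, S ⊆ U := by
  classical
  intro P hP hPx
  obtain ⟨F, hF, hwin⟩ := h
  have hnode : ∀ (n : ℕ) (d : ℕ → piNetworks x), ∃ C ∈ P, ∃ M : X → piNetworks x,
      ∀ y ∈ C, F n (fun i => (Function.update d n (M y) i.val : Set (Set X))) = {y} := by
    intro n d
    obtain ⟨U, hU, hans⟩ := exists_nhds_answers hF n d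
    obtain ⟨C, hC, hCU⟩ := hPx U hU
    have (y : X) : ∃ D : piNetworks x, y ∈ C →
        F n (fun i => (Function.update d n D i.val : Set (Set X))) = {y} := by
      by_cases hy : y ∈ C
      · obtain ⟨D, hD⟩ := hans y (hCU hy)
        exact ⟨D, fun _ => hD⟩
      · exact ⟨d 0, fun h => absurd h hy⟩
    choose M hM using this
    exact ⟨C, hC, M, hM⟩
  choose C hCP M hM using hnode
  let d₀ : ℕ → piNetworks x := fun _ => ⟨{{x}}, by
    refine ⟨?_, fun U hU => ⟨{x}, rfl, singleton_subset_iff.2 (mem_of_mem_nhds hU)⟩⟩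
    rintro S rfl
    exact ⟨finite_singleton x, singleton_nonempty x⟩⟩
  -- `T n` is the `n`-th level of the tree of positions.
  let T : ℕ → Set (ℕ → piNetworks x) := fun n => Nat.rec {d₀}
    (fun n A => ⋃ d ∈ A, (fun y => Function.update d n (M n d y)) '' C n d) n
  have hT : ∀ n, (T n).Countable := by
    intro n
    induction n with
    | zero => exact countable_singleton d₀
    | succ n ih => exact ih.biUnion fun d _ => ((hP _ (hCP n d)).1).image _
  refine ⟨⋃ n, C n '' T n, ?_, countable_iUnion fun n => (hT n).image _, ?_⟩
  · refine iUnion_subset fun n => ?_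
    rintro _ ⟨d, -, rfl⟩
    exact hCP n d
  intro U hU
  by_contra! hcon
  have hpt : ∀ (n : ℕ) (d : ℕ → piNetworks x), ∃ y, d ∈ T n → y ∈ C n d ∧ y ∉ U := by
    intro n d
    rcases Classical.em (d ∈ T n) with hd | hd
    · obtain ⟨y, hy⟩ := not_subset.1 (hcon (C n d) (mem_iUnion.2 ⟨n, d, hd, rfl⟩))
      exact ⟨y, fun _ => hy⟩
    · exact ⟨x, fun h => absurd h hd⟩
  choose c hc using hpt
  -- `e n` is the `n`-th node of a branch along which all answers avoid `U`.
  let e : ℕ → ℕ → piNetworks x := fun n => Nat.rec d₀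
    (fun n d => Function.update d n (M n d (c n d))) n
  have he_succ (n : ℕ) : e (n + 1) = Function.update (e n) n (M n (e n) (c n (e n))) := rfl
  have heT : ∀ n, e n ∈ T n := by
    intro n
    induction n with
    | zero => exact mem_singleton d₀
    | succ n ih => exact mem_biUnion ih ⟨c n (e n), (hc n _ ih).1, rfl⟩
  have hstab : ∀ i n, i < n → e n i = e (i + 1) i := by
    intro i n hin
    induction n, hin using Nat.le_induction with
    | base => rfl
    | succ n hn ih =>
      rw [he_succ n, Function.update_of_ne (by omega), ih]
  obtain ⟨S, ⟨n, rfl⟩, hS⟩ := hwin (fun i => (e (i + 1) i : Set (Set X)))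
    (fun i => Subtype.property _) U hU
  have hrun : F n (fun i => (e (i.val + 1) i.val : Set (Set X))) = {c n (e n)} := by
    rw [← hM n (e n) _ (hc n _ (heT n)).1, ← he_succ n]
    congr 1
    funext i
    rw [hstab i.val (n + 1) i.isLt]
  rw [hrun, singleton_subset_iff] at hS
  exact (hc n _ (heT n)).2 hS
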